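/- arXiv:1412.1793 — 2 statements merged into one kernel-verified Lean document; each statement's English description precedes it below -/
import Mathlib

section
/- Let G be a graph of distance VC-dimension at most d and let A, B be an independent pair in G. If no subpair of A, B of size 2^{d+1} satisfies the escape property, then the size of A, B is at most r_{2^{2^{d+2}}}(2^{d+1}), where r_k(n) denotes a multicolor Ramsey bound: every complete graph on more than r_k(n) vertices whose edges are colored with k colors contains a monochromatic clique of size n. -/
open SimpleGraph

variable {V : Type*}

/-- The ball of center `v` and radius `k` in a graph. -/
def gball (G : SimpleGraph V) (v : V) (k : ℕ) : Set V :=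
  {w | G.edist v w ≤ (k : ℕ∞)}

/-- `p` precedes or equals `q` in the lexicographic order on walks induced by a total order on
edges, where the edge lists are compared from the last edge to the first. -/
def WalkLexLE [LinearOrder (Sym2 V)] (G : SimpleGraph V) {x z : V} (p q : G.Walk x z) : Prop :=
  p.edges.reverse = q.edges.reverse ∨ List.Lex (· < ·) p.edges.reverse q.edges.reverse

/-- `p` is the minimum `xz`-path: a path of minimum length which, among the paths of minimum
length, has minimum lexicographic order. -/
def IsMinPath [LinearOrder (Sym2 V)] (G : SimpleGraph V) {x z : V} (p : G.Walk x z) : Prop :=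
  p.IsPath ∧ (∀ q : G.Walk x z, p.length ≤ q.length) ∧
    ∀ q : G.Walk x z, q.IsPath → q.length = p.length → WalkLexLE G p q

/-- `P a b` is the support (vertex list) of the minimum `ab`-path `P_{ab}`, for all
`(a, b) ∈ A × B`. -/
def IsMinPathFamily [LinearOrder (Sym2 V)] (G : SimpleGraph V) (A B : Finset V)
    (P : V → V → List V) : Prop :=
  ∀ a ∈ A, ∀ b ∈ B, ∃ w : G.Walk a b, IsMinPath G w ∧ w.support = P a b

/-- The critical vertex `c_{ab}`: the vertex of `P_{ab}` at distance `ℓ - 3` from `a`. -/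
def critA (ℓ : ℕ) (P : V → V → List V) (a b : V) : V :=
  (P a b).getD (ℓ - 3) a

/-- The pre-critical vertex `c⁻_{ab}`: the vertex of `P_{ab}` at distance `ℓ - 4` from `a`. -/
def precritA (ℓ : ℕ) (P : V → V → List V) (a b : V) : V :=
  (P a b).getD (ℓ - 4) a

/-- The critical vertex `c_{ba}`: the vertex of `P_{ab}` at distance `ℓ - 3` from `b`. -/
def critB (ℓ : ℕ) (P : V → V → List V) (a b : V) : V :=
  (P a b).getD ((P a b).length - (ℓ - 2)) a

/-- The pair `A, B` is `d`-localized: `A` and `B` are disjoint, the vertices of `A ∪ B` are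
pairwise at distance at least `ℓ + 1`, and `d(a,b) ≤ 2ℓ - 2^{d+2} - 3` for all
`(a, b) ∈ A × B`. -/
def DLocalizedPair (G : SimpleGraph V) (ℓ d : ℕ) (A B : Finset V) : Prop :=
  Disjoint A B ∧
  (∀ u ∈ (A : Set V) ∪ (B : Set V), ∀ v ∈ (A : Set V) ∪ (B : Set V), u ≠ v → (ℓ : ℕ∞) + 1 ≤ G.edist u v) ∧
  (∀ a ∈ A, ∀ b ∈ B, G.edist a b + 2 ^ (d + 2) + 3 ≤ 2 * (ℓ : ℕ∞))

/-- The `d`-localized pair `A, B` is independent: for every `(a, b) ∈ A × B`,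
`B(c_{ab}, ℓ) ∩ (A ∪ B) = {a, b}` and `B(c_{ba}, ℓ) ∩ (A ∪ B) = {a, b}`. -/
def IndependentPair (G : SimpleGraph V) (ℓ d : ℕ) (A B : Finset V)
    (P : V → V → List V) : Prop :=
  DLocalizedPair G ℓ d A B ∧
  ∀ a ∈ A, ∀ b ∈ B,
    gball G (critA ℓ P a b) ℓ ∩ ((A : Set V) ∪ (B : Set V)) = {a, b} ∧
    gball G (critB ℓ P a b) ℓ ∩ ((A : Set V) ∪ (B : Set V)) = {a, b}

/-- The root section `RS(a)` of `a ∈ A`: union over `b ∈ B` of the vertices of the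
`a`–`c_{ab}` subpaths of `P_{ab}`. -/
def RSA (ℓ : ℕ) (B : Finset V) (P : V → V → List V) (a : V) : Set V :=
  {v | ∃ b ∈ B, v ∈ (P a b).take (ℓ - 2)}

/-- The root section `RS(b)` of `b ∈ B`: union over `a ∈ A` of the vertices of the
`c_{ba}`–`b` subpaths of `P_{ab}`. -/
def RSB (ℓ : ℕ) (A : Finset V) (P : V → V → List V) (b : V) : Set V :=
  {v | ∃ a ∈ A, v ∈ (P a b).drop ((P a b).length - (ℓ - 2))}

/-- `uv` is an edge of the path whose vertex list is `l`: `u` and `v` are consecutive in `l`. -/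
def IsEdgeOfList (l : List V) (u v : V) : Prop :=
  ∃ i : ℕ, (l[i]? = some u ∧ l[i + 1]? = some v) ∨ (l[i]? = some v ∧ l[i + 1]? = some u)

/-- `uv` is an escape from `a`: an edge with `u ∈ RS(a)`, `v ∉ RS(a)` which is not an edge of
any path `P_{ab}`, `b ∈ B`. -/
def IsEscape (G : SimpleGraph V) (ℓ : ℕ) (B : Finset V) (P : V → V → List V)
    (a u v : V) : Prop :=
  G.Adj u v ∧ u ∈ RSA ℓ B P a ∧ v ∉ RSA ℓ B P a ∧ ∀ b ∈ B, ¬ IsEdgeOfList (P a b) u v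

/-- `uv` is an escape from `a` to `a'` for `b`: an escape from `a` whose end `v` lies on
`P_{a'b}`, with `a' ≠ a`. -/
def IsEscapeTo (G : SimpleGraph V) (ℓ : ℕ) (B : Finset V) (P : V → V → List V)
    (a a' b u v : V) : Prop :=
  IsEscape G ℓ B P a u v ∧ a' ≠ a ∧ v ∈ P a' b

/-- Arc `a → a'` of the escape graph of `b`: there is an escape from `a` to `a'` for `b`. -/
def EscapeArc (G : SimpleGraph V) (ℓ : ℕ) (A B : Finset V) (P : V → V → List V)
    (b a a' : V) : Prop :=
  a ∈ A ∧ a' ∈ A ∧ ∃ u v, IsEscapeTo G ℓ B P a a' b u v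

/-- `uv` is a deep escape from `a`: an escape whose beginning `u` is neither a critical vertex
nor a pre-critical vertex. -/
def IsDeepEscape (G : SimpleGraph V) (ℓ : ℕ) (A B : Finset V) (P : V → V → List V)
    (a u v : V) : Prop :=
  IsEscape G ℓ B P a u v ∧
  ∀ a'' ∈ A, ∀ b'' ∈ B, u ≠ critA ℓ P a'' b'' ∧ u ≠ precritA ℓ P a'' b''

/-- Arc `a → a'` of the deep escape graph of `b`: there is a deep escape from `a` to `a'`
for `b`. -/
def DeepEscapeArc (G : SimpleGraph V) (ℓ : ℕ) (A B : Finset V) (P : V → V → List V)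
    (b a a' : V) : Prop :=
  a ∈ A ∧ a' ∈ A ∧ ∃ u v, IsDeepEscape G ℓ A B P a u v ∧ a' ≠ a ∧ v ∈ P a' b

/-- The pair `A, B` has the escape property: for every `b ∈ B`, the deep escape graph of `b` is
a transitive tournament on `A`. -/
def EscapeProperty (G : SimpleGraph V) (ℓ : ℕ) (A B : Finset V)
    (P : V → V → List V) : Prop :=
  ∀ b ∈ B,
    (∀ a ∈ A, ∀ a' ∈ A, a ≠ a' →
      (DeepEscapeArc G ℓ A B P b a a' ∨ DeepEscapeArc G ℓ A B P b a' a) ∧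
      ¬ (DeepEscapeArc G ℓ A B P b a a' ∧ DeepEscapeArc G ℓ A B P b a' a)) ∧
    (∀ a ∈ A, ∀ a' ∈ A, ∀ a'' ∈ A, DeepEscapeArc G ℓ A B P b a a' →
      DeepEscapeArc G ℓ A B P b a' a'' → DeepEscapeArc G ℓ A B P b a a'')

/-- `X` is shattered by the B-hypergraph of `G` (hyperedges: all balls of all radii). -/
def BShattered (G : SimpleGraph V) (X : Set V) : Prop :=
  ∀ Y ⊆ X, ∃ (v : V) (k : ℕ), gball G v k ∩ X = Y

/-- The distance VC-dimension of `G` is at most `d`. -/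
def distVCdimLE (G : SimpleGraph V) (d : ℕ) : Prop :=
  ∀ (S : Set V) (X : Set S), BShattered (SimpleGraph.induce S G) X → X.ncard ≤ d

/-- Combinatorial facts extracted from an independent pair. -/
structure GeoPair (G : SimpleGraph V) (ℓ d : ℕ) (A B : Finset V) (P : V → V → List V)
    (D : V → V → ℕ) : Prop where
  hdisj : Disjoint A B
  hl0 : 2 ^ (d + 2) + 4 ≤ ℓ
  dlow : ∀ a ∈ A, ∀ b ∈ B, ℓ + 1 ≤ D a b
  dup : ∀ a ∈ A, ∀ b ∈ B, D a b + 2 ^ (d + 2) + 3 ≤ 2 * ℓ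
  dmin : ∀ a ∈ A, ∀ b ∈ B, ∀ n : ℕ, G.edist a b ≤ n → D a b ≤ n
  zero : ∀ a ∈ A, ∀ b ∈ B, (P a b)[0]? = some a
  last : ∀ a ∈ A, ∀ b ∈ B, (P a b)[D a b]? = some b
  le_of : ∀ a ∈ A, ∀ b ∈ B, ∀ i x, (P a b)[i]? = some x → i ≤ D a b
  ex : ∀ a ∈ A, ∀ b ∈ B, ∀ i, i ≤ D a b → ∃ x, (P a b)[i]? = some x
  seg : ∀ a ∈ A, ∀ b ∈ B, ∀ i j x y, (P a b)[i]? = some x → (P a b)[j]? = some y → i ≤ j →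
    G.edist x y ≤ ((j - i : ℕ) : ℕ∞)
  ind : ∀ a ∈ A, ∀ b ∈ B, ∀ x, (P a b)[ℓ - 3]? = some x → ∀ y, (y ∈ A ∨ y ∈ B) →
    G.edist x y ≤ (ℓ : ℕ∞) → y = a ∨ y = b
  walk : ∀ a ∈ A, ∀ b ∈ B, ∃ w : G.Walk a b, w.support = P a b ∧ w.length = D a b

theorem edist_tri {G : SimpleGraph V} {x y z : V} {m n : ℕ} (h1 : G.edist x y ≤ (m : ℕ∞))
    (h2 : G.edist y z ≤ (n : ℕ∞)) : G.edist x z ≤ ((m + n : ℕ) : ℕ∞) := by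
  push_cast
  exact G.edist_triangle.trans (add_le_add h1 h2)

theorem edist_sym' {G : SimpleGraph V} {x y : V} {m : ℕ} (h1 : G.edist x y ≤ (m : ℕ∞)) :
    G.edist y x ≤ (m : ℕ∞) := by
  rwa [G.edist_comm]

theorem edist_mono' {G : SimpleGraph V} {x y : V} {m n : ℕ} (h1 : G.edist x y ≤ (m : ℕ∞))
    (h : m ≤ n) : G.edist x y ≤ (n : ℕ∞) :=
  h1.trans (by exact_mod_cast h)

theorem walk_out {G : SimpleGraph V} {H : Set V} {x y : H}
    (w : (SimpleGraph.induce H G).Walk x y) :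
    ∃ w' : G.Walk x.1 y.1, (∀ v ∈ w'.support, v ∈ H) ∧ w'.length = w.length := by
  induction w with
  | nil => exact ⟨Walk.nil, by simp, rfl⟩
  | @cons u v z hadj p ih =>
    obtain ⟨p', h1, h2⟩ := ih
    have hadj' : G.Adj u.1 v.1 := hadj
    refine ⟨Walk.cons hadj' p', ?_, by simp [h2]⟩
    intro t ht
    rw [Walk.support_cons, List.mem_cons] at ht
    rcases ht with rfl | ht
    · exact u.2
    · exact h1 t ht

theorem walk_seg {G : SimpleGraph V} {a b : V} (w : G.Walk a b) :
    ∀ i j x y, w.support[i]? = some x → w.support[j]? = some y → i ≤ j →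
    G.edist x y ≤ ((j - i : ℕ) : ℕ∞) := by
  intro i j x y hx hy hij
  have hj : j ≤ w.length := by
    have := (List.getElem?_eq_some_iff.1 hy).1
    rw [w.length_support] at this; omega
  have key : ∀ i, i ≤ w.length → w.support[i]? = some (w.getVert i) := by
    intro i hi
    rw [List.getElem?_eq_some_iff]
    refine ⟨by rw [w.length_support]; omega, ?_⟩
    rw [w.support_getElem_eq_getVert]
  rw [key i (by omega)] at hx
  rw [key j hj] at hy
  simp only [Option.some.injEq] at hx hy
  subst hx hy
  have h2 := ((w.drop i).take (j - i)).edist_le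
  have h3 : (w.drop i).getVert (j - i) = w.getVert j := by
    rw [w.drop_getVert]; congr 1; omega
  refine (le_of_eq_of_le (by rw [h3]) h2).trans ?_
  have : ((w.drop i).take (j-i)).length ≤ j - i := by
    rw [Walk.take_length]; exact min_le_left _ _
  exact_mod_cast this

theorem geoPair_of [LinearOrder (Sym2 V)] {G : SimpleGraph V} {ℓ d : ℕ} {A B : Finset V}
    {P : V → V → List V} (hP : IsMinPathFamily G A B P) (hind : IndependentPair G ℓ d A B P)
    (hA : A.Nonempty) (hB : B.Nonempty) :
    GeoPair G ℓ d A B P (fun a b => (P a b).length - 1) := by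
  obtain ⟨⟨hdisj, hfar, hnear⟩, hcrit⟩ := hind
  have hmin : ∀ a ∈ A, ∀ b ∈ B, G.edist a b = (((P a b).length - 1 : ℕ) : ℕ∞) := by
    intro a ha b hb
    obtain ⟨w, ⟨_, h2, _⟩, hw⟩ := hP a ha b hb
    rw [← hw, w.length_support, Nat.add_sub_cancel]
    apply le_antisymm w.edist_le
    obtain ⟨q, hq⟩ := (w.reachable).exists_walk_length_eq_edist
    rw [← hq]; exact_mod_cast h2 q
  have hlow : ∀ a ∈ A, ∀ b ∈ B, ℓ + 1 ≤ (P a b).length - 1 := by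
    intro a ha b hb
    have h := hfar a (Or.inl ha) b (Or.inr hb) (by
      rintro rfl; exact Finset.disjoint_left.1 hdisj ha hb)
    rw [hmin a ha b hb] at h
    exact_mod_cast h
  have hup : ∀ a ∈ A, ∀ b ∈ B, (P a b).length - 1 + 2 ^ (d + 2) + 3 ≤ 2 * ℓ := by
    intro a ha b hb
    have h := hnear a ha b hb
    rw [hmin a ha b hb] at h
    exact_mod_cast h
  refine ⟨hdisj, ?_, hlow, hup, ?_, ?_, ?_, ?_, ?_, ?_, ?_, ?_⟩
  · obtain ⟨a, ha⟩ := hA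
    obtain ⟨b, hb⟩ := hB
    have h1 := hlow a ha b hb
    have h2 := hup a ha b hb
    omega
  · intro a ha b hb n hn
    rw [hmin a ha b hb] at hn
    exact_mod_cast hn
  · intro a ha b hb
    obtain ⟨w, _, hw⟩ := hP a ha b hb
    rw [← hw]; cases w <;> simp
  · intro a ha b hb
    obtain ⟨w, _, hw⟩ := hP a ha b hb
    rw [← hw, ← List.getLast?_eq_getElem?, List.getLast?_eq_getLast_of_ne_nil w.support_ne_nil,
      w.getLast_support]
  · intro a ha b hb i x hx
    have := (List.getElem?_eq_some_iff.1 hx).1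
    show i ≤ (P a b).length - 1
    omega
  · intro a ha b hb i hi
    have := hlow a ha b hb
    have hi : i ≤ (P a b).length - 1 := hi
    exact ⟨_, List.getElem?_eq_getElem (by omega)⟩
  · intro a ha b hb
    obtain ⟨w, _, hw⟩ := hP a ha b hb
    rw [← hw]; exact walk_seg w
  · intro a ha b hb x hx y hy hxy
    have h := (hcrit a ha b hb).1
    have hc : critA ℓ P a b = x := by
      unfold critA
      rw [List.getD_eq_getElem?_getD, hx]; rfl
    rw [hc] at h
    have : y ∈ gball G x ℓ ∩ ((A : Set V) ∪ (B : Set V)) := ⟨hxy, hy⟩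
    rw [h] at this
    simpa using this
  · intro a ha b hb
    obtain ⟨w, _, hw⟩ := hP a ha b hb
    refine ⟨w, hw, ?_⟩
    show w.length = (P a b).length - 1
    rw [← hw, w.length_support, Nat.add_sub_cancel]

/-- Intrinsic description of the arcs of the deep escape graphs. -/
def CArc (G : SimpleGraph V) (ℓ : ℕ) (P : V → V → List V) (b a a' : V) : Prop :=
  ∃ u v i, G.Adj u v ∧ i < ℓ - 4 ∧ (P a b)[i]? = some u ∧ v ∈ P a' b ∧
    v ∉ (P a b).take (ℓ - 2)

namespace GeoPair

variable {G : SimpleGraph V} {ℓ d : ℕ} {A B : Finset V} {P : V → V → List V}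
  {D : V → V → ℕ}

theorem hl (h : GeoPair G ℓ d A B P D) : 2 ^ (d + 2) + 4 ≤ ℓ ∧ 4 ≤ 2 ^ (d + 2) := by
  refine ⟨h.hl0, ?_⟩
  have : 1 ≤ 2 ^ d := Nat.one_le_two_pow
  rw [pow_add]; omega

theorem nb (h : GeoPair G ℓ d A B P D) {a b : V} (ha : a ∈ A) (hb : b ∈ B) : a ≠ b := by
  rintro rfl; exact Finset.disjoint_left.1 h.hdisj ha hb

/-- Root sections of different vertices of `A` are far apart (half). -/
theorem far_half (h : GeoPair G ℓ d A B P D) {a a' b b' u v : V} {i j : ℕ} (ha : a ∈ A)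
    (ha' : a' ∈ A) (hne : a ≠ a') (hb : b ∈ B) (hb' : b' ∈ B) (hu : (P a b)[i]? = some u)
    (hv : (P a' b')[j]? = some v) (hj : j ≤ ℓ - 3)
    (huv : G.edist u v ≤ ((1 : ℕ) : ℕ∞)) : j + 3 ≤ i := by
  by_contra hcon
  have hl := h.hl
  have hd := h.dlow a' ha' b' hb'
  obtain ⟨c, hc⟩ := h.ex a' ha' b' hb' (ℓ - 3) (by omega)
  have h1 := h.seg a ha b hb 0 i a u (h.zero a ha b hb) hu (by omega)
  have h2 := h.seg a' ha' b' hb' j (ℓ - 3) v c hv hc hj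
  have h3 := edist_mono' (n := ℓ) (edist_sym' (edist_tri (edist_tri h1 huv) h2)) (by omega)
  rcases h.ind a' ha' b' hb' c hc a (Or.inl ha) h3 with e | e
  · exact hne e
  · exact h.nb ha hb' e

theorem far (h : GeoPair G ℓ d A B P D) {a a' b b' u v : V} {i j : ℕ} (ha : a ∈ A)
    (ha' : a' ∈ A) (hne : a ≠ a') (hb : b ∈ B) (hb' : b' ∈ B) (hu : (P a b)[i]? = some u)
    (hi : i ≤ ℓ - 3) (hv : (P a' b')[j]? = some v)
    (huv : G.edist u v ≤ ((1 : ℕ) : ℕ∞)) : ℓ - 2 ≤ j := by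
  by_contra hcon
  have h1 := h.far_half ha ha' hne hb hb' hu hv (by omega) huv
  have h2 := h.far_half ha' ha hne.symm hb' hb hv hu hi (edist_sym' huv)
  omega

theorem same_b (h : GeoPair G ℓ d A B P D) {a a' b b' u v : V} {i j : ℕ} (ha : a ∈ A)
    (ha' : a' ∈ A) (hne : a ≠ a') (hb : b ∈ B) (hb' : b' ∈ B) (hu : (P a b)[i]? = some u)
    (hi : i ≤ ℓ - 3) (hv : (P a' b')[j]? = some v)
    (huv : G.edist u v ≤ ((1 : ℕ) : ℕ∞)) : b' = b := by
  have hj := h.far ha ha' hne hb hb' hu hi hv huv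
  have hl := h.hl
  have hd := h.dlow a ha b hb
  have hd' := h.dlow a' ha' b' hb'
  have hup' := h.dup a' ha' b' hb'
  have hjD := h.le_of a' ha' b' hb' j v hv
  obtain ⟨c', hc'⟩ := h.ex a' ha' b' hb' (ℓ - 3) (by omega)
  obtain ⟨c, hc⟩ := h.ex a ha b hb (ℓ - 3) (by omega)
  have h1 := h.seg a ha b hb 0 i a u (h.zero a ha b hb) hu (by omega)
  have h2 := h.seg a' ha' b' hb' (ℓ - 3) j c' v hc' hv (by omega)
  have h4 := h.seg a ha b hb i (ℓ - 3) u c hu hc hi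
  have h5 := h.seg a' ha' b' hb' j _ v b' hv (h.last a' ha' b' hb') hjD
  have k1 : ¬ (i + 1 + (j - (ℓ - 3)) ≤ ℓ) := by
    intro hh
    have h3 := edist_mono' (n := ℓ) (edist_sym' (edist_tri (edist_tri h1 huv) (edist_sym' h2)))
      (by omega)
    rcases h.ind a' ha' b' hb' c' hc' a (Or.inl ha) h3 with e | e
    · exact hne e
    · exact h.nb ha hb' e
  have h3 := edist_mono' (n := ℓ) (edist_tri (edist_tri (edist_sym' h4) huv) h5) (by omega)
  rcases h.ind a ha b hb c hc b' (Or.inr hb') h3 with e | e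
  · exact absurd e.symm (h.nb ha hb')
  · exact e

theorem pos_unique (h : GeoPair G ℓ d A B P D) {a b b' u : V} {i j : ℕ} (ha : a ∈ A)
    (hb : b ∈ B) (hb' : b' ∈ B) (hu : (P a b)[i]? = some u) (hv : (P a b')[j]? = some u) :
    i ≤ j := by
  have hi := h.le_of a ha b hb i u hu
  have h1 := h.seg a ha b hb i _ u b hu (h.last a ha b hb) hi
  have h2 := h.seg a ha b' hb' 0 j a u (h.zero a ha b' hb') hv (by omega)
  have h3 := h.dmin a ha b hb _ (edist_tri h2 h1)
  omega

theorem carc_lt (h : GeoPair G ℓ d A B P D) {a a' b : V} (ha : a ∈ A) (ha' : a' ∈ A)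
    (hne : a ≠ a') (hb : b ∈ B) (hc : CArc G ℓ P b a a') : D a b < D a' b := by
  obtain ⟨u, v, i, huv, hi, hu, hv, -⟩ := hc
  obtain ⟨j, hv⟩ := List.mem_iff_getElem?.1 hv
  have e : G.edist u v ≤ ((1 : ℕ) : ℕ∞) := by simpa using (edist_eq_one_iff_adj.2 huv).le
  have hj := h.far ha ha' hne hb hb hu (by omega) hv e
  have hl := h.hl
  have hjD := h.le_of a' ha' b hb j v hv
  have h1 := h.seg a ha b hb 0 i a u (h.zero a ha b hb) hu (by omega)
  have h5 := h.seg a' ha' b hb j _ v b hv (h.last a' ha' b hb) hjD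
  have := h.dmin a ha b hb _ (edist_tri (edist_tri h1 e) h5)
  omega

theorem mem_take {l : List V} {n : ℕ} {x : V} (hx : x ∈ l.take n) :
    ∃ i < n, l[i]? = some x := by
  obtain ⟨i, hi⟩ := List.mem_iff_getElem?.1 hx
  rw [List.getElem?_take] at hi
  split_ifs at hi with hh
  exact ⟨i, hh, hi⟩

theorem take_mem {l : List V} {n i : ℕ} {x : V} (hi : i < n) (hx : l[i]? = some x) :
    x ∈ l.take n := by
  refine List.mem_iff_getElem?.2 ⟨i, ?_⟩
  rw [List.getElem?_take, if_pos hi, hx]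

theorem crit_eq (h : GeoPair G ℓ d A B P D) {a b : V} (ha : a ∈ A) (hb : b ∈ B) :
    (P a b)[ℓ - 3]? = some (critA ℓ P a b) ∧ (P a b)[ℓ - 4]? = some (precritA ℓ P a b) := by
  have hd := h.dlow a ha b hb
  obtain ⟨c, hc⟩ := h.ex a ha b hb (ℓ - 3) (by omega)
  obtain ⟨c', hc'⟩ := h.ex a ha b hb (ℓ - 4) (by omega)
  unfold critA precritA
  rw [List.getD_eq_getElem?_getD, List.getD_eq_getElem?_getD, hc, hc']
  exact ⟨rfl, rfl⟩

theorem deep_iff (h : GeoPair G ℓ d A B P D) {A' B' : Finset V} (hA' : A' ⊆ A) (hB' : B' ⊆ B)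
    {a a' b : V} (ha : a ∈ A') (ha' : a' ∈ A') (hb : b ∈ B') :
    DeepEscapeArc G ℓ A' B' P b a a' ↔ a ≠ a' ∧ CArc G ℓ P b a a' := by
  have hl := h.hl
  constructor
  · rintro ⟨-, -, u, v, ⟨⟨huv, ⟨b0, hb0, hu⟩, hv, -⟩, hdeep⟩, hne, hvP⟩
    obtain ⟨i, hi, hu⟩ := mem_take hu
    obtain ⟨j, hj⟩ := List.mem_iff_getElem?.1 hvP
    have e : G.edist u v ≤ ((1 : ℕ) : ℕ∞) := by simpa using (edist_eq_one_iff_adj.2 huv).le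
    have hbb := h.same_b (hA' ha) (hA' ha') hne.symm (hB' hb0) (hB' hb) hu (by omega) hj e
    subst hbb
    refine ⟨hne.symm, u, v, i, huv, ?_, hu, hvP, fun hh => hv ⟨b, hb, hh⟩⟩
    have h1 := hdeep a ha b hb
    have h2 := h.crit_eq (hA' ha) (hB' hb)
    by_contra hcon
    have : i = ℓ - 3 ∨ i = ℓ - 4 := by omega
    rcases this with rfl | rfl
    · rw [hu] at h2; exact h1.1 (by simpa using h2.1)
    · rw [hu] at h2; exact h1.2 (by simpa using h2.2)
  · rintro ⟨hne, u, v, i, huv, hi, hu, hvP, hvn⟩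
    obtain ⟨j, hj⟩ := List.mem_iff_getElem?.1 hvP
    have e : G.edist u v ≤ ((1 : ℕ) : ℕ∞) := by simpa using (edist_eq_one_iff_adj.2 huv).le
    have hvR : v ∉ RSA ℓ B' P a := by
      rintro ⟨b2, hb2, hv2⟩
      by_cases hbb : b = b2
      · subst hbb; exact hvn hv2
      · obtain ⟨t, ht, hv2⟩ := mem_take hv2
        exact hbb (h.same_b (hA' ha) (hA' ha') hne (hB' hb2) (hB' hb) hv2 (by omega) hj (by simp))
    refine ⟨ha, ha', u, v, ⟨⟨huv, ⟨b, hb, take_mem (by omega) hu⟩, hvR, ?_⟩, ?_⟩, hne.symm, hvP⟩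
    · rintro b2 hb2 ⟨m, ⟨hm1, hm2⟩ | ⟨hm1, hm2⟩⟩
      · have := h.pos_unique (hA' ha) (hB' hb2) (hB' hb) hm1 hu
        exact hvR ⟨b2, hb2, take_mem (by omega) hm2⟩
      · have := h.pos_unique (hA' ha) (hB' hb2) (hB' hb) hm2 hu
        exact hvR ⟨b2, hb2, take_mem (by omega) hm1⟩
    · intro a2 ha2 b2 hb2
      obtain ⟨c1, c2⟩ := h.crit_eq (hA' ha2) (hB' hb2)
      have key : ∀ m, m ≤ ℓ - 3 → ℓ - 4 ≤ m → (P a2 b2)[m]? ≠ some u := by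
        intro m hm hm' hh
        by_cases haa : a = a2
        · subst haa
          have := h.pos_unique (hA' ha) (hB' hb2) (hB' hb) hh hu
          omega
        · have := h.far (hA' ha) (hA' ha2) haa (hB' hb) (hB' hb2) hu (by omega) hh (by simp)
          omega
      constructor
      · intro hh; rw [← hh] at c1; exact key _ le_rfl (by omega) c1
      · intro hh; rw [← hh] at c2; exact key _ (by omega) le_rfl c2

/-- Clique case: the escape property. -/
theorem escape_of_clique (h : GeoPair G ℓ d A B P D) {A' B' : Finset V} (hA' : A' ⊆ A)
    (hB' : B' ⊆ B) (hc : ∀ b ∈ B', ∀ a ∈ A', ∀ a' ∈ A', a ≠ a' →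
      CArc G ℓ P b a a' ∨ CArc G ℓ P b a' a) : EscapeProperty G ℓ A' B' P := by
  intro b hb
  constructor
  · intro a ha a' ha' hne
    rw [h.deep_iff hA' hB' ha ha' hb, h.deep_iff hA' hB' ha' ha hb]
    refine ⟨?_, ?_⟩
    · rcases hc b hb a ha a' ha' hne with k | k
      · exact Or.inl ⟨hne, k⟩
      · exact Or.inr ⟨hne.symm, k⟩
    · rintro ⟨⟨_, k1⟩, ⟨_, k2⟩⟩
      exact lt_asymm (h.carc_lt (hA' ha) (hA' ha') hne (hB' hb) k1)
        (h.carc_lt (hA' ha') (hA' ha) hne.symm (hB' hb) k2)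
  · intro a ha a' ha' a2 ha2
    rw [h.deep_iff hA' hB' ha ha' hb, h.deep_iff hA' hB' ha' ha2 hb, h.deep_iff hA' hB' ha ha2 hb]
    rintro ⟨n1, k1⟩ ⟨n2, k2⟩
    have l1 := h.carc_lt (hA' ha) (hA' ha') n1 (hB' hb) k1
    have l2 := h.carc_lt (hA' ha') (hA' ha2) n2 (hB' hb) k2
    have hne : a ≠ a2 := by rintro rfl; omega
    refine ⟨hne, ?_⟩
    rcases hc b hb a ha a2 ha2 hne with k | k
    · exact k
    · have := h.carc_lt (hA' ha2) (hA' ha) hne.symm (hB' hb) k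
      omega

/-- Key distance estimate in the stable case. -/
theorem walk_long (h : GeoPair G ℓ d A B P D) {A' X : Finset V} (hA' : A' ⊆ A)
    (hX : X ⊆ B) (hc : ∀ b ∈ X, ∀ a ∈ A', ∀ a' ∈ A', a ≠ a' → ¬ CArc G ℓ P b a a')
    {a : V} (ha : a ∈ A') {Y : Finset V} (hY : Y ⊆ X) (hYne : Y.Nonempty)
    {b : V} (hb : b ∈ X) (hbY : b ∉ Y) (H : Set V)
    (hH : ∀ v ∈ H, ∃ a' ∈ A', ∃ b' ∈ X, v ∈ P a' b' ∧ (a' = a → b' ∈ Y))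
    (w : G.Walk a b) (hw : ∀ v ∈ w.support, v ∈ H)
    (hlen : w.length + 2 ^ (d + 2) + 3 ≤ 2 * ℓ) : False := by
  classical
  have hl := h.hl
  have haS : a ∈ RSA ℓ Y P a := by
    obtain ⟨y, hy⟩ := hYne
    exact ⟨y, hy, take_mem (by omega) (h.zero a (hA' ha) y (hX (hY hy)))⟩
  have hbS : b ∉ RSA ℓ Y P a := by
    rintro ⟨y, hy, hh⟩
    obtain ⟨i, hi, hh⟩ := mem_take hh
    have := h.pos_unique (hA' ha) (hX hb) (hX (hY hy)) (h.last a (hA' ha) b (hX hb)) hh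
    have := h.dlow a (hA' ha) b (hX hb)
    omega
  obtain ⟨dt, hdt, hu, hv⟩ := w.exists_boundary_dart _ haS hbS
  obtain ⟨⟨u, v⟩, huv⟩ := dt
  simp only at hu hv
  have huv : G.Adj u v := huv
  have husup : u ∈ w.support := w.dart_fst_mem_support_of_mem_darts hdt
  have hvsup : v ∈ w.support := w.dart_snd_mem_support_of_mem_darts hdt
  obtain ⟨b0, hb0, hu⟩ := hu
  obtain ⟨i, hi, hu⟩ := mem_take hu
  have e : G.edist u v ≤ ((1 : ℕ) : ℕ∞) := by simpa using (edist_eq_one_iff_adj.2 huv).le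
  have hb0B := hX (hY hb0)
  have haA := hA' ha
  have hdeep : i < ℓ - 4 := by
    by_contra hcon
    have hs := congrArg Walk.length (w.take_spec husup)
    rw [Walk.length_append] at hs
    have h1 : i ≤ (w.takeUntil u husup).length := by
      have e1 := (w.takeUntil u husup).edist_le
      have hiD := h.le_of a haA b0 hb0B i u hu
      have e2 := h.seg a haA b0 hb0B i _ u b0 hu (h.last a haA b0 hb0B) hiD
      have := h.dmin a haA b0 hb0B _ (edist_tri e1 e2)
      omega
    have h2 := (w.dropUntil u husup).edist_le
    have hd := h.dlow a haA b0 hb0B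
    obtain ⟨c, hcc⟩ := h.ex a haA b0 hb0B (ℓ - 3) (by omega)
    have h3 := h.seg a haA b0 hb0B i (ℓ - 3) u c hu hcc (by omega)
    have h4 := edist_mono' (n := ℓ) (edist_tri (edist_sym' h3) h2) (by omega)
    rcases h.ind a haA b0 hb0B c hcc b (Or.inr (hX hb)) h4 with k | k
    · exact h.nb haA (hX hb) k.symm
    · subst k; exact hbY hb0
  obtain ⟨a', ha', b', hb', hvP, hcond⟩ := hH v (hw v hvsup)
  obtain ⟨j, hj⟩ := List.mem_iff_getElem?.1 hvP
  by_cases haa : a' = a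
  · have hbY' := hcond haa
    subst haa
    apply hv
    refine ⟨b', hbY', take_mem ?_ hj⟩
    have hjD := h.le_of a' haA b' (hX hb') j v hj
    have e1 := h.seg a' haA b0 hb0B 0 i a' u (h.zero a' haA b0 hb0B) hu (by omega)
    have e2 := h.seg a' haA b' (hX hb') j _ v b' hj (h.last a' haA b' (hX hb')) hjD
    have := h.dmin a' haA b' (hX hb') _ (edist_tri (edist_tri e1 e) e2)
    omega
  · have hbb := h.same_b haA (hA' ha') (Ne.symm haa) hb0B (hX hb') hu (by omega) hj e
    subst hbb
    exact hc b' hb' a ha a' ha' (Ne.symm haa) ⟨u, v, i, huv, hdeep, hu, hvP,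
      fun hh => hv (Exists.intro _ (And.intro hb0 hh))⟩

/-- Stable case: a shattered set of size `d + 1` in an induced subgraph. -/
theorem stable_contra (h : GeoPair G ℓ d A B P D) (hvc : distVCdimLE G d) {A' X : Finset V}
    (hA' : A' ⊆ A) (hX : X ⊆ B)
    (hc : ∀ b ∈ X, ∀ a ∈ A', ∀ a' ∈ A', a ≠ a' → ¬ CArc G ℓ P b a a')
    (hAc : A'.card = 2 ^ (d + 1)) (hXc : X.card = d + 1) : False := by
  classical
  have hl := h.hl
  have e : X.powerset ≃ A' := Finset.equivOfCardEq (by rw [Finset.card_powerset, hXc, hAc])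
  let H : Set V := {v | ∃ Z : X.powerset, ∃ b ∈ Z.1, v ∈ P (e Z) b}
  have hZ : ∀ Z : X.powerset, Z.1 ⊆ X := fun Z => Finset.mem_powerset.1 Z.2
  have heA : ∀ Z : X.powerset, (e Z).1 ∈ A := fun Z => hA' (e Z).2
  have hcen : ∀ Z : X.powerset, Z.1.Nonempty → (e Z).1 ∈ H := by
    rintro Z ⟨b, hb⟩
    exact ⟨Z, b, hb, List.mem_iff_getElem?.2 ⟨0, h.zero _ (heA Z) b (hX (hZ Z hb))⟩⟩
  have hXne : X.Nonempty := by rw [← Finset.card_pos]; omega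
  let T : X.powerset := ⟨X, Finset.mem_powerset_self X⟩
  have hXH : ∀ b ∈ X, b ∈ H := by
    intro b hb
    exact ⟨T, b, hb, List.mem_iff_getElem?.2 ⟨_, h.last _ (heA T) b (hX hb)⟩⟩
  let XS : Set H := {x | x.1 ∈ X}
  have hcard : XS.ncard = d + 1 := by
    rw [← Set.ncard_image_of_injective XS Subtype.val_injective]
    have : (Subtype.val '' XS : Set V) = (X : Set V) := by
      ext x
      constructor
      · rintro ⟨y, hy, rfl⟩; exact hy
      · intro hx; exact ⟨⟨x, hXH x hx⟩, hx, rfl⟩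
    rw [this, Set.ncard_coe_finset, hXc]
  have hsh : BShattered (SimpleGraph.induce H G) XS := by
    intro Y' hY'
    let Y : Finset V := X.filter (fun b => ∃ hb : b ∈ H, (⟨b, hb⟩ : H) ∈ Y')
    have hYX : Y ⊆ X := Finset.filter_subset _ _
    have hYmem : ∀ x : H, x ∈ Y' ↔ x.1 ∈ Y := by
      intro x
      constructor
      · intro hx; exact Finset.mem_filter.2 ⟨hY' hx, x.2, hx⟩
      · intro hx; exact (Finset.mem_filter.1 hx).2.2
    by_cases hYne : Y.Nonempty
    · let Z : X.powerset := ⟨Y, Finset.mem_powerset.2 hYX⟩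
      refine ⟨⟨(e Z).1, hcen Z hYne⟩, 2 * ℓ - 2 ^ (d + 2) - 3, ?_⟩
      ext x
      rw [hYmem]
      constructor
      · rintro ⟨hx1, hx2⟩
        by_contra hxY
        have hx1 : (SimpleGraph.induce H G).edist _ x ≤ _ := hx1
        obtain ⟨w, hw⟩ := SimpleGraph.exists_walk_of_edist_ne_top
          (ne_top_of_le_ne_top (ENat.natCast_ne_top _) hx1)
        rw [← hw] at hx1
        have hx1 : w.length ≤ 2 * ℓ - 2 ^ (d + 2) - 3 := by exact_mod_cast hx1
        obtain ⟨w', hw'1, hw'2⟩ := walk_out w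
        refine h.walk_long hA' hX hc (e Z).2 hYX hYne hx2 hxY H ?_ w' hw'1 ?_
        · rintro v ⟨Z', b', hb', hv⟩
          refine ⟨e Z', (e Z').2, b', hZ Z' hb', hv, ?_⟩
          intro hee
          have : Z' = Z := e.injective (Subtype.ext hee)
          subst this; exact hb'
        · have hup := h.dup _ (heA Z) x.1 (hX hx2)
          omega
      · intro hxY
        have hxX := hYX hxY
        refine ⟨?_, hxX⟩
        obtain ⟨w, hw, hwl⟩ := h.walk _ (heA Z) x.1 (hX hxX)
        have hs : ∀ v ∈ w.support, v ∈ H := by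
          intro v hv; rw [hw] at hv; exact ⟨Z, x.1, hxY, hv⟩
        have h1 := (w.induce H hs).edist_le
        have h2 := h.dup _ (heA Z) x.1 (hX hxX)
        have h3 : (w.induce H hs).length = w.length := by
          have := congrArg Walk.length (w.map_induce hs)
          rwa [Walk.length_map] at this
        rw [h3] at h1
        exact edist_mono' h1 (by omega)
    · refine ⟨⟨(e T).1, hcen T hXne⟩, 0, ?_⟩
      ext x
      rw [hYmem]
      constructor
      · rintro ⟨hx1, hx2⟩
        have hx1 : (SimpleGraph.induce H G).edist _ x ≤ ((0 : ℕ) : ℕ∞) := hx1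
        have : (⟨(e T).1, hcen T hXne⟩ : H) = x := by
          rw [← SimpleGraph.edist_eq_zero_iff (G := SimpleGraph.induce H G)]
          simpa using hx1
        subst this
        exact absurd rfl (h.nb (heA T) (hX hx2))
      · intro hx; exact absurd ⟨_, hx⟩ hYne
  have := hvc H XS hsh
  omega

end GeoPair

theorem vc_zero [Finite V] {G : SimpleGraph V} (hvc : distVCdimLE G 0) (x y : V) : x = y := by
  by_contra hne
  have hs : BShattered (SimpleGraph.induce Set.univ G) {⟨x, trivial⟩} := by
    intro Y hY
    rcases Set.subset_singleton_iff_eq.1 hY with rfl | rfl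
    · refine ⟨⟨y, trivial⟩, 0, ?_⟩
      ext z
      simp only [gball, Set.mem_inter_iff, Set.mem_ofPred_eq, Set.mem_singleton_iff,
        Set.mem_empty_iff_false, iff_false]
      rintro ⟨h1, rfl⟩
      have h1 : (SimpleGraph.induce Set.univ G).edist ⟨y, trivial⟩ ⟨x, trivial⟩ = 0 := by
        simpa using h1
      rw [SimpleGraph.edist_eq_zero_iff] at h1
      exact hne (congrArg Subtype.val h1).symm
    · refine ⟨⟨x, trivial⟩, 0, ?_⟩
      ext z
      simp only [gball, Set.mem_inter_iff, Set.mem_ofPred_eq, Set.mem_singleton_iff,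
        and_iff_right_iff_imp]
      rintro rfl
      simp
  have := hvc _ _ hs
  simp at this

/-- The Ramsey bound is at least `2 ^ (d + 2) - 1` when `d ≥ 1`. -/
theorem ramsey_large {d r : ℕ} (hd : d ≠ 0)
    (hr : ∀ (W : Type) (_ : Fintype W), r < Fintype.card W →
      ∀ col : Sym2 W → Fin (2 ^ 2 ^ (d + 2)),
        ∃ (S : Finset W) (c : Fin (2 ^ 2 ^ (d + 2))), S.card = 2 ^ (d + 1) ∧
          ∀ u ∈ S, ∀ v ∈ S, u ≠ v → col s(u, v) = c) : 2 ^ (d + 2) ≤ r + 1 := by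
  classical
  by_contra hcon
  let W := Fin (2 ^ (d + 2))
  have e : Fin (2 ^ 2 ^ (d + 2)) ≃ Finset W := by
    refine Fintype.equivOfCardEq ?_
    simp [W]
  obtain ⟨S, c, hS, hc⟩ := hr W inferInstance (by simp [W]; omega)
    (fun z => e.symm (Finset.univ.filter (fun x => x ∈ z)))
  have h2 : 2 < S.card := by
    rw [hS]
    calc 2 < 2 ^ (1 + 1) := by norm_num
      _ ≤ 2 ^ (d + 1) := Nat.pow_le_pow_right (by norm_num) (by omega)
  obtain ⟨x, y, z, hx, hy, hz, hxy, hxz, hyz⟩ := Finset.two_lt_card_iff.1 h2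
  have h3 := (hc x hx y hy hxy).trans (hc x hx z hz hxz).symm
  have h4 := e.symm.injective h3
  have h5 : y ∈ Finset.univ.filter (fun t => t ∈ s(x, z)) := by
    rw [← h4]; simp
  simp at h5
  rcases h5 with h5 | h5
  · exact hxy h5.symm
  · exact hyz h5

/-- Lemma `sgclique`: if `G` has distance VC-dimension at most `d` and the
independent pair `A, B` has no subpair of size `2^{d+1}` with the escape property, then the
size of `A, B` is at most the Ramsey bound `r` for `2^{2^{d+2}}` colors and monochromatic
cliques of size `2^{d+1}`. -/
theorem stmt16 (d ℓ : ℕ) {V : Type*} [Fintype V] [LinearOrder (Sym2 V)]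
    (G : SimpleGraph V) (hvc : distVCdimLE G d)
    (A B : Finset V) (P : V → V → List V)
    (hP : IsMinPathFamily G A B P)
    (hind : IndependentPair G ℓ d A B P)
    (r : ℕ)
    (hr : ∀ (W : Type) (_ : Fintype W), r < Fintype.card W →
      ∀ col : Sym2 W → Fin (2 ^ 2 ^ (d + 2)),
        ∃ (S : Finset W) (c : Fin (2 ^ 2 ^ (d + 2))), S.card = 2 ^ (d + 1) ∧
          ∀ u ∈ S, ∀ v ∈ S, u ≠ v → col s(u, v) = c)
    (hnosub : ¬ ∃ A' B' : Finset V, A' ⊆ A ∧ B' ⊆ B ∧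
        min A'.card B'.card = 2 ^ (d + 1) ∧ EscapeProperty G ℓ A' B' P) :
    min A.card B.card ≤ r := by
  classical
  by_contra hcon
  have hAr : r < A.card := by have := min_le_left A.card B.card; omega
  have hBr : r < B.card := by have := min_le_right A.card B.card; omega
  have hA : A.Nonempty := Finset.card_pos.1 (by omega)
  have hB : B.Nonempty := Finset.card_pos.1 (by omega)
  have h := geoPair_of hP hind hA hB
  by_cases hd : d = 0
  · subst hd
    obtain ⟨a, ha⟩ := hA
    obtain ⟨b, hb⟩ := hB
    exact h.nb ha hb (vc_zero hvc a b)
  have hrl := ramsey_large hd hr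
  obtain ⟨B1, hB1, hB1c⟩ := Finset.exists_subset_card_eq (s := B) (n := 2 ^ (d + 2)) (by omega)
  have e : Fin (2 ^ 2 ^ (d + 2)) ≃ Finset B1 := by
    refine Fintype.equivOfCardEq ?_
    simp [hB1c]
  have f : Fin A.card ≃ A := A.equivFin.symm
  obtain ⟨S, c, hS, hc⟩ := hr (Fin A.card) inferInstance (by simpa using hAr)
    (fun z => e.symm (Finset.univ.filter (fun b : B1 =>
      ∃ x y, z = s(x, y) ∧ CArc G ℓ P b.1 (f x).1 (f y).1)))
  let A' : Finset V := S.image (fun x => (f x).1)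
  have hfinj : Function.Injective (fun x => (f x).1) :=
    fun x y hxy => f.injective (Subtype.ext hxy)
  have hA' : A' ⊆ A := by
    intro x hx
    obtain ⟨y, _, rfl⟩ := Finset.mem_image.1 hx
    exact (f y).2
  have hA'c : A'.card = 2 ^ (d + 1) := by
    rw [Finset.card_image_of_injective _ hfinj, hS]
  let K : Finset V := B1.filter (fun b => ∃ hb : b ∈ B1, (⟨b, hb⟩ : B1) ∈ e c)
  let N : Finset V := B1.filter (fun b => ¬ ∃ hb : b ∈ B1, (⟨b, hb⟩ : B1) ∈ e c)
  have hKN : K.card + N.card = 2 ^ (d + 2) := by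
    rw [← hB1c]; exact Finset.card_filter_add_card_filter_not _
  have hiff : ∀ b (hb : b ∈ B1), ∀ a ∈ A', ∀ a' ∈ A', a ≠ a' →
      ((⟨b, hb⟩ : B1) ∈ e c ↔ CArc G ℓ P b a a' ∨ CArc G ℓ P b a' a) := by
    intro b hb a ha a' ha' hne
    obtain ⟨x, hx, rfl⟩ := Finset.mem_image.1 ha
    obtain ⟨y, hy, rfl⟩ := Finset.mem_image.1 ha'
    have hxy : x ≠ y := by rintro rfl; exact hne rfl
    rw [← hc x hx y hy hxy, Equiv.apply_symm_apply]
    simp only [Finset.mem_filter, Finset.mem_univ, true_and]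
    constructor
    · rintro ⟨x', y', hz, hh⟩
      rcases Sym2.eq_iff.1 hz with ⟨rfl, rfl⟩ | ⟨rfl, rfl⟩
      · exact Or.inl hh
      · exact Or.inr hh
    · rintro (hh | hh)
      · exact ⟨x, y, rfl, hh⟩
      · exact ⟨y, x, Sym2.eq_swap, hh⟩
  have hpow : 2 ^ (d + 2) = 2 * 2 ^ (d + 1) := by ring
  by_cases hK : 2 ^ (d + 1) ≤ K.card
  · obtain ⟨B', hB', hB'c⟩ := Finset.exists_subset_card_eq hK
    have hB'B1 : B' ⊆ B1 := hB'.trans (Finset.filter_subset _ _)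
    refine hnosub ⟨A', B', hA', hB'B1.trans hB1, by rw [hA'c, hB'c, min_self],
      h.escape_of_clique hA' (hB'B1.trans hB1) ?_⟩
    intro b hb a ha a' ha' hne
    obtain ⟨hb1, hm⟩ := (Finset.mem_filter.1 (hB' hb)).2
    exact (hiff b hb1 a ha a' ha' hne).1 hm
  · have hdl : d + 1 < 2 ^ (d + 1) := Nat.lt_two_pow_self
    obtain ⟨X, hX, hXc⟩ := Finset.exists_subset_card_eq (s := N) (n := d + 1) (by omega)
    have hXB1 : X ⊆ B1 := hX.trans (Finset.filter_subset _ _)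
    refine h.stable_contra hvc hA' (hXB1.trans hB1) ?_ hA'c hXc
    intro b hb a ha a' ha' hne hh
    exact (Finset.mem_filter.1 (hX hb)).2
      ⟨hXB1 hb, (hiff b (hXB1 hb) a ha a' ha' hne).2 (Or.inl hh)⟩
end

section
/- Let G be a graph of distance VC-dimension at most d. Every independent pair A, B in G that satisfies the escape property has size at most 2^{d+1} − 1. -/
open SimpleGraph

variable {V : Type*}

/-- There is a walk of length at most `n` from `x` to `y`. -/
def Near (G : SimpleGraph V) (n : ℕ) (x y : V) : Prop := ∃ w : G.Walk x y, w.length ≤ n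

theorem Near.symm' {G : SimpleGraph V} {n : ℕ} {x y : V} (h : Near G n x y) : Near G n y x := by
  obtain ⟨w, hw⟩ := h
  exact ⟨w.reverse, by simpa using hw⟩

theorem Near.trans' {G : SimpleGraph V} {n m : ℕ} {x y z : V} (h : Near G n x y)
    (h' : Near G m y z) : Near G (n + m) x z := by
  obtain ⟨w, hw⟩ := h
  obtain ⟨w', hw'⟩ := h'
  exact ⟨w.append w', by rw [SimpleGraph.Walk.length_append]; omega⟩

theorem near_refl (G : SimpleGraph V) (n : ℕ) (x : V) : Near G n x x := ⟨.nil, by simp⟩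

theorem near_adj {G : SimpleGraph V} {x y : V} (h : G.Adj x y) : Near G 1 x y :=
  ⟨.cons h .nil, by simp⟩

theorem near_edist {G : SimpleGraph V} {n : ℕ} {x y : V} :
    G.edist x y ≤ (n : ℕ∞) ↔ Near G n x y := by
  constructor
  · intro h
    obtain ⟨w, hw⟩ := SimpleGraph.exists_walk_of_edist_ne_top
      (ne_top_of_le_ne_top (ENat.natCast_ne_top n) h)
    refine ⟨w, ?_⟩
    rw [← hw] at h
    exact_mod_cast h
  · rintro ⟨w, hw⟩
    exact le_trans w.edist_le (by exact_mod_cast hw)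

theorem mem_support_short {G : SimpleGraph V} {x y v : V} (w : G.Walk x y) (hw : w.length ≤ 1)
    (hv : v ∈ w.support) : v = x ∨ v = y := by
  cases w with
  | nil => left; simpa using hv
  | cons hadj w2 =>
    cases w2 with
    | nil => simpa using hv
    | cons _ _ => simp at hw

/-- The combinatorial data extracted from an independent pair with the escape property:
`p a b i` is the vertex of index `i` of the path from `a` to `b`, of length `D a b`. -/
structure Setup (G : SimpleGraph V) (ℓ : ℕ) (A B : Finset V) (p : V → V → ℕ → V)
    (D : V → V → ℕ) : Prop where
  p0 : ∀ a ∈ A, ∀ b ∈ B, p a b 0 = a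
  pD : ∀ a ∈ A, ∀ b ∈ B, p a b (D a b) = b
  adj : ∀ a ∈ A, ∀ b ∈ B, ∀ i, i < D a b → G.Adj (p a b i) (p a b (i + 1))
  geo : ∀ a ∈ A, ∀ b ∈ B, ∀ m, Near G m a b → D a b ≤ m
  hD1 : ∀ a ∈ A, ∀ b ∈ B, ℓ + 1 ≤ D a b
  hD2 : ∀ a ∈ A, ∀ b ∈ B, D a b + 7 ≤ 2 * ℓ
  disj : ∀ a ∈ A, ∀ b ∈ B, a ≠ b
  cA : ∀ a ∈ A, ∀ b ∈ B, ∀ x, (x ∈ A ∨ x ∈ B) → x ≠ a → x ≠ b →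
    ∀ m, Near G m (p a b (ℓ - 3)) x → ℓ + 1 ≤ m
  cB : ∀ a ∈ A, ∀ b ∈ B, ∀ x, (x ∈ A ∨ x ∈ B) → x ≠ a → x ≠ b →
    ∀ m, Near G m (p a b (D a b - (ℓ - 3))) x → ℓ + 1 ≤ m
  esc : ∀ b ∈ B, ∀ a ∈ A, ∀ a' ∈ A, a ≠ a' →
    (∃ b1 ∈ B, ∃ i j, i + 5 ≤ ℓ ∧ j ≤ D a' b ∧ Near G 1 (p a b1 i) (p a' b j)) ∨
    (∃ b1 ∈ B, ∃ i j, i + 5 ≤ ℓ ∧ j ≤ D a b ∧ Near G 1 (p a' b1 i) (p a b j))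

namespace Setup

variable {G : SimpleGraph V} {ℓ : ℕ} {A B : Finset V} {p : V → V → ℕ → V} {D : V → V → ℕ}

theorem near (h : Setup G ℓ A B p D) {a b : V} (ha : a ∈ A) (hb : b ∈ B) (i k : ℕ)
    (hk : i + k ≤ D a b) : Near G k (p a b i) (p a b (i + k)) := by
  induction k with
  | zero => exact near_refl _ _ _
  | succ k ih => exact (ih (by omega)).trans' (near_adj (h.adj a ha b hb (i + k) (by omega)))

theorem near' (h : Setup G ℓ A B p D) {a b : V} (ha : a ∈ A) (hb : b ∈ B) {i j : ℕ}
    (hi : i ≤ D a b) (hj : j ≤ D a b) : Near G (i - j + (j - i)) (p a b i) (p a b j) := by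
  rcases le_total i j with hij | hij
  · have := h.near ha hb i (j - i) (by omega)
    rw [show i + (j - i) = j by omega] at this
    rw [show i - j + (j - i) = j - i by omega]
    exact this
  · have := h.near ha hb j (i - j) (by omega)
    rw [show j + (i - j) = i by omega] at this
    rw [show i - j + (j - i) = i - j by omega]
    exact this.symm'

theorem toA (h : Setup G ℓ A B p D) {a b : V} (ha : a ∈ A) (hb : b ∈ B) {i : ℕ}
    (hi : i ≤ D a b) : Near G i (p a b i) a := by
  have := h.near' ha hb hi (Nat.zero_le _)
  rw [h.p0 a ha b hb] at this
  simpa using this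

theorem toB (h : Setup G ℓ A B p D) {a b : V} (ha : a ∈ A) (hb : b ∈ B) {i : ℕ}
    (hi : i ≤ D a b) : Near G (D a b - i) (p a b i) b := by
  have := h.near' ha hb hi le_rfl
  rw [h.pD a ha b hb] at this
  rwa [show i - D a b + (D a b - i) = D a b - i by omega] at this

/-- Both inequalities given by the critical vertices. -/
theorem far (h : Setup G ℓ A B p D) {a b x : V} (ha : a ∈ A) (hb : b ∈ B)
    (hx : x ∈ A ∨ x ∈ B) (hxa : x ≠ a) (hxb : x ≠ b) {i m : ℕ} (hi : i ≤ D a b)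
    (hm : Near G m (p a b i) x) :
    ℓ + 1 ≤ ((ℓ - 3) - i + (i - (ℓ - 3))) + m ∧
    ℓ + 1 ≤ ((D a b - (ℓ - 3)) - i + (i - (D a b - (ℓ - 3)))) + m := by
  have h1 := h.hD1 a ha b hb
  exact ⟨h.cA a ha b hb x hx hxa hxb _ ((h.near' ha hb (by omega) hi).trans' hm),
    h.cB a ha b hb x hx hxa hxb _ ((h.near' ha hb (by omega) hi).trans' hm)⟩

/-- Two close vertices on two paths: inequalities when the `A`-ends differ. -/
theorem farA (h : Setup G ℓ A B p D) {a b a' b' : V} (ha : a ∈ A) (hb : b ∈ B)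
    (ha' : a' ∈ A) (hb' : b' ∈ B) (hne : a ≠ a') {i j e : ℕ} (hi : i ≤ D a b)
    (hj : j ≤ D a' b') (hm : Near G e (p a b i) (p a' b' j)) :
    (ℓ + 1 ≤ ((ℓ - 3) - i + (i - (ℓ - 3))) + (e + j) ∧
    ℓ + 1 ≤ ((D a b - (ℓ - 3)) - i + (i - (D a b - (ℓ - 3)))) + (e + j)) ∧
    (ℓ + 1 ≤ ((ℓ - 3) - j + (j - (ℓ - 3))) + (e + i) ∧
    ℓ + 1 ≤ ((D a' b' - (ℓ - 3)) - j + (j - (D a' b' - (ℓ - 3)))) + (e + i)) :=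
  ⟨h.far ha hb (Or.inl ha') hne.symm (h.disj a' ha' b hb) hi (hm.trans' (h.toA ha' hb' hj)),
   h.far ha' hb' (Or.inl ha) hne (h.disj a ha b' hb') hj (hm.symm'.trans' (h.toA ha hb hi))⟩

theorem farB (h : Setup G ℓ A B p D) {a b a' b' : V} (ha : a ∈ A) (hb : b ∈ B)
    (ha' : a' ∈ A) (hb' : b' ∈ B) (hne : b ≠ b') {i j e : ℕ} (hi : i ≤ D a b)
    (hj : j ≤ D a' b') (hm : Near G e (p a b i) (p a' b' j)) :
    (ℓ + 1 ≤ ((ℓ - 3) - i + (i - (ℓ - 3))) + (e + (D a' b' - j)) ∧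
    ℓ + 1 ≤ ((D a b - (ℓ - 3)) - i + (i - (D a b - (ℓ - 3)))) + (e + (D a' b' - j))) ∧
    (ℓ + 1 ≤ ((ℓ - 3) - j + (j - (ℓ - 3))) + (e + (D a b - i)) ∧
    ℓ + 1 ≤ ((D a' b' - (ℓ - 3)) - j + (j - (D a' b' - (ℓ - 3)))) + (e + (D a b - i))) :=
  ⟨h.far ha hb (Or.inr hb') (h.disj a ha b' hb').symm hne.symm hi
      (hm.trans' (h.toB ha' hb' hj)),
   h.far ha' hb' (Or.inr hb) (h.disj a' ha' b hb).symm hne hj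
      (hm.symm'.trans' (h.toB ha hb hi))⟩

/-- Paths with different ends are disjoint and non adjacent. -/
theorem F2 (h : Setup G ℓ A B p D) {a b a' b' : V} (ha : a ∈ A) (hb : b ∈ B)
    (ha' : a' ∈ A) (hb' : b' ∈ B) (hne : a ≠ a') {i j : ℕ} (hi : i ≤ D a b)
    (hj : j ≤ D a' b') (hm : Near G 1 (p a b i) (p a' b' j)) : b = b' := by
  by_contra hbb
  have h1 := h.farA ha hb ha' hb' hne hi hj hm
  have h2 := h.farB ha hb ha' hb' hbb hi hj hm
  have := h.hD1 a ha b hb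
  have := h.hD2 a ha b hb
  have := h.hD1 a' ha' b' hb'
  have := h.hD2 a' ha' b' hb'
  generalize D a b = x at *
  generalize D a' b' = y at *
  obtain ⟨⟨h3, h4⟩, h5, h6⟩ := h1
  obtain ⟨⟨h7, h8⟩, h9, h10⟩ := h2
  omega

/-- Root sections are at distance at least four. -/
theorem F3 (h : Setup G ℓ A B p D) {a b a' b' : V} (ha : a ∈ A) (hb : b ∈ B)
    (ha' : a' ∈ A) (hb' : b' ∈ B) (hne : a ≠ a') {i j e : ℕ} (hi : i ≤ ℓ - 3)
    (hj : j ≤ ℓ - 3) (he : e ≤ 3) (hm : Near G e (p a b i) (p a' b' j)) : False := by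
  have := h.hD1 a ha b hb
  have := h.hD2 a ha b hb
  have := h.hD1 a' ha' b' hb'
  have := h.hD2 a' ha' b' hb'
  obtain ⟨⟨h3, h4⟩, h5, h6⟩ := h.farA ha hb ha' hb' hne (by omega) (by omega) hm
  omega

theorem F4 (h : Setup G ℓ A B p D) {a b a' b' : V} (ha : a ∈ A) (hb : b ∈ B)
    (ha' : a' ∈ A) (hb' : b' ∈ B) {i j : ℕ} (hi : ℓ - 3 ≤ i)
    (hj : ℓ - 3 ≤ j) (hi' : i ≤ D a b) (hj' : j ≤ D a' b')
    (hm : Near G 1 (p a b i) (p a' b' j)) : b = b' := by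
  by_contra hbb
  have := h.hD1 a ha b hb
  have := h.hD2 a ha b hb
  have := h.hD1 a' ha' b' hb'
  have := h.hD2 a' ha' b' hb'
  obtain ⟨⟨h3, h4⟩, h5, h6⟩ := h.farB ha hb ha' hb' hbb hi' hj' hm
  omega

/-- Heights. -/
theorem F5 (h : Setup G ℓ A B p D) {a b a' : V} (ha : a ∈ A) (hb : b ∈ B)
    (ha' : a' ∈ A) {i j e : ℕ} (hi : i ≤ D a b) (hj : j ≤ D a' b)
    (hm : Near G e (p a b i) (p a' b j)) : D a b ≤ i + (e + (D a' b - j)) :=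
  h.geo a ha b hb _ ((h.toA ha hb hi).symm'.trans' (hm.trans' (h.toB ha' hb hj)))

theorem F5' (h : Setup G ℓ A B p D) {a b m : _} (ha : a ∈ A) (hb : b ∈ B)
    {i : ℕ} (hi : i ≤ D a b) (hm : Near G m a (p a b i)) : i ≤ m := by
  have := h.geo a ha b hb _ (hm.trans' (h.toB ha hb hi))
  omega

theorem F6aux (h : Setup G ℓ A B p D) {a b a' b1 : V} (ha : a ∈ A) (hb : b ∈ B)
    (ha' : a' ∈ A) (hb1 : b1 ∈ B) (hne : a ≠ a') {i j : ℕ} (hi : i + 5 ≤ ℓ)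
    (hj : j ≤ D a' b) (hm : Near G 1 (p a b1 i) (p a' b j)) :
    b1 = b ∧ D a b + 2 ≤ D a' b := by
  have := h.hD1 a ha b1 hb1
  have e := h.F2 ha hb1 ha' hb hne (by omega) hj hm
  subst e
  refine ⟨rfl, ?_⟩
  have hj2 : ¬ j ≤ ℓ - 3 := fun hj2 =>
    h.F3 ha hb1 ha' hb1 hne (by omega) hj2 (by norm_num) hm
  have := h.F5 ha hb1 ha' (by omega) hj hm
  omega

theorem F6 (h : Setup G ℓ A B p D) {a b a' : V} (ha : a ∈ A) (hb : b ∈ B)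
    (ha' : a' ∈ A) (hne : a ≠ a') (hle : D a b ≤ D a' b) :
    D a b + 2 ≤ D a' b ∧ ∃ i j, i + 5 ≤ ℓ ∧ j ≤ D a' b ∧ Near G 1 (p a b i) (p a' b j) := by
  rcases h.esc b hb a ha a' ha' hne with ⟨b1, hb1, i, j, hi, hj, hm⟩ | ⟨b1, hb1, i, j, hi, hj, hm⟩
  · obtain ⟨e, h1⟩ := h.F6aux ha hb ha' hb1 hne hi hj hm
    subst e
    exact ⟨h1, i, j, hi, hj, hm⟩
  · obtain ⟨e, h1⟩ := h.F6aux ha' hb ha hb1 hne.symm hi hj hm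
    omega

end Setup

/-- The path from `k` to `b` meets, at index `j`, the root section of a lower vertex of `Y`. -/
def Meets (G : SimpleGraph V) (ℓ : ℕ) (p : V → V → ℕ → V) (D : V → V → ℕ) (Y : Finset V)
    (k b : V) (j : ℕ) : Prop :=
  ∃ a ∈ Y, D a b < D k b ∧ ∃ i ≤ ℓ - 3, Near G 1 (p a b i) (p k b j)

/-- The index `j` of the path from `k` to `b` is kept. -/
def Kept (G : SimpleGraph V) (ℓ : ℕ) (p : V → V → ℕ → V) (D : V → V → ℕ) (Y : Finset V)
    (k b : V) (j : ℕ) : Prop :=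
  j ≤ D k b ∧ ∀ n < j, ¬ Meets G ℓ p D Y k b n

/-- The vertices of the induced subgraph. -/
def KSet (G : SimpleGraph V) (ℓ : ℕ) (B : Finset V) (p : V → V → ℕ → V) (D : V → V → ℕ)
    (Y : V → Finset V) : Set V :=
  {v | ∃ b ∈ B, ∃ k ∈ Y b, ∃ j, Kept G ℓ p D (Y b) k b j ∧ v = p k b j}

namespace Setup

variable {G : SimpleGraph V} {ℓ : ℕ} {A B : Finset V} {p : V → V → ℕ → V} {D : V → V → ℕ}

theorem meets_ge (h : Setup G ℓ A B p D) {Y : Finset V} (hY : Y ⊆ A) {k b : V} (hk : k ∈ A)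
    (hb : b ∈ B) {j : ℕ} (hm : Meets G ℓ p D Y k b j) : ¬ j ≤ ℓ - 3 := by
  intro hj
  obtain ⟨a, ha, hlt, i, hi, hn⟩ := hm
  exact h.F3 (hY ha) hb hk hb (by rintro rfl; omega) hi hj (by norm_num) hn

theorem kept_root (h : Setup G ℓ A B p D) {Y : Finset V} (hY : Y ⊆ A) {k b : V} (hk : k ∈ A)
    (hb : b ∈ B) {j : ℕ} (hj : j ≤ ℓ - 3) : Kept G ℓ p D Y k b j := by
  have := h.hD1 k hk b hb
  exact ⟨by omega, fun j' hj' hm => h.meets_ge hY hk hb hm (by omega)⟩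

/-- Kept tails are high. -/
theorem kept_high (h : Setup G ℓ A B p D) {Y : Finset V} (hY : Y ⊆ A) {k b a : V} (hk : k ∈ A)
    (hb : b ∈ B) (ha : a ∈ Y) (hne : a ≠ k) (hlt : D a b ≤ D k b) {j : ℕ}
    (hj : Kept G ℓ p D Y k b j) : D a b + j + 4 ≤ D k b + ℓ := by
  obtain ⟨h1, i, j0, hi, hj0, hm⟩ := h.F6 (hY ha) hb hk hne hlt
  have : j ≤ j0 := by
    by_contra hc
    exact hj.2 j0 (by omega) ⟨a, ha, by omega, i, by omega, hm⟩
  have h3 := h.hD1 a (hY ha) b hb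
  have := h.F5 (hY ha) hb hk (by omega) hj0 hm
  omega

/-- Upper bound on distances in the induced subgraph. -/
theorem upper (h : Setup G ℓ A B p D) (Y : V → Finset V) (hY : ∀ b ∈ B, Y b ⊆ A)
    {b : V} (hb : b ∈ B) : ∀ n, ∀ k ∈ Y b, D k b ≤ n → ∀ m j, D k b - j = m →
      Kept G ℓ p D (Y b) k b j →
      ∃ w : G.Walk (p k b j) b, w.length ≤ m + 2 * ((Y b).filter (fun a => D a b < D k b)).card ∧
        ∀ v ∈ w.support, v ∈ KSet G ℓ B p D Y := by
  intro n
  induction n with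
  | zero =>
    intro k hk hn
    have := h.hD1 k (hY b hb hk) b hb
    omega
  | succ n ihn =>
    intro k hk hn m
    have hkA := hY b hb hk
    induction m with
    | zero =>
      intro j hm hj
      have hjD : j = D k b := by have := hj.1; omega
      subst hjD
      have e := h.pD k hkA b hb
      refine ⟨SimpleGraph.Walk.nil.copy rfl e, by simp, ?_⟩
      intro v hv
      simp only [SimpleGraph.Walk.support_copy, SimpleGraph.Walk.support_nil,
        List.mem_singleton] at hv
      exact ⟨b, hb, k, hk, _, hj, hv⟩
    | succ m ihm =>
      intro j hm hj
      by_cases hme : Meets G ℓ p D (Y b) k b j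
      · obtain ⟨a, ha, hlt, i, hi, hn1⟩ := hme
        have haA := hY b hb ha
        have h1 := h.hD1 a haA b hb
        have h5 := h.F5 haA hb hkA (by omega) hj.1 hn1
        obtain ⟨w, hw, hs⟩ := ihn a ha (by omega) _ i rfl (h.kept_root (hY b hb) haA hb hi)
        have hcard : ((Y b).filter (fun x => D x b < D a b)).card + 1 ≤
            ((Y b).filter (fun x => D x b < D k b)).card := by
          apply Finset.card_lt_card
          rw [Finset.ssubset_iff_of_subset]
          · exact ⟨a, by simp [ha, hlt], by simp⟩
          · intro x hx
            simp only [Finset.mem_filter] at hx ⊢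
            exact ⟨hx.1, by omega⟩
        obtain ⟨w1, hw1⟩ := hn1.symm'
        refine ⟨w1.append w, by rw [SimpleGraph.Walk.length_append]; omega, ?_⟩
        intro v hv
        rw [SimpleGraph.Walk.mem_support_append_iff] at hv
        rcases hv with hv | hv
        · have : v = p k b j ∨ v ∈ w.support := by
            rcases mem_support_short w1 hw1 hv with hv | hv
            · exact Or.inl hv
            · right; rw [hv]; exact w.start_mem_support
          rcases this with rfl | hv
          · exact ⟨b, hb, k, hk, j, hj, rfl⟩
          · exact hs v hv
        · exact hs v hv
      · have hk1 : Kept G ℓ p D (Y b) k b (j + 1) := by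
          refine ⟨by omega, fun j' hj' => ?_⟩
          rcases Nat.lt_succ_iff_lt_or_eq.mp hj' with h1 | rfl
          · exact hj.2 j' h1
          · exact hme
        obtain ⟨w, hw, hs⟩ := ihm (j + 1) (by omega) hk1
        refine ⟨.cons (h.adj k hkA b hb j (by omega)) w, by
          rw [SimpleGraph.Walk.length_cons]; omega, ?_⟩
        intro v hv
        rw [SimpleGraph.Walk.support_cons, List.mem_cons] at hv
        rcases hv with rfl | hv
        · exact ⟨b, hb, k, hk, j, hj, rfl⟩
        · exact hs v hv

/-- The trap around `a`. -/
def Trap (G : SimpleGraph V) (ℓ : ℕ) (B : Finset V) (p : V → V → ℕ → V) (D : V → V → ℕ)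
    (Y : V → Finset V) (a : V) : Set V :=
  {v | (∃ b1 ∈ B, a ∈ Y b1 ∧ ∃ i ≤ ℓ - 3, v = p a b1 i) ∨
    ∃ b1 ∈ B, a ∈ Y b1 ∧ ∃ k ∈ Y b1, D a b1 < D k b1 ∧ ∃ j, ¬ j ≤ ℓ - 3 ∧
      Kept G ℓ p D (Y b1) k b1 j ∧ v = p k b1 j ∧
      ∃ j1, Kept G ℓ p D (Y b1) k b1 j1 ∧ ∃ i ≤ ℓ - 3, Near G 1 (p a b1 i) (p k b1 j1)}

theorem lower_step (h : Setup G ℓ A B p D) (Y : V → Finset V) (hY : ∀ b ∈ B, Y b ⊆ A)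
    {a b : V} (haA : a ∈ A) (hb : b ∈ B) (hab : a ∉ Y b) {z q : V}
    (hz : z ∈ Trap G ℓ B p D Y a) (hq : q ∉ Trap G ℓ B p D Y a)
    (hqS : q ∈ KSet G ℓ B p D Y) (hzq : G.Adj z q) {m1 m2 : ℕ}
    (hm1 : Near G m1 a q) (hm2 : Near G m2 q b) : 2 * ℓ ≤ m1 + m2 + 2 := by
  obtain ⟨b', hb', k', hk', j', hj', rfl⟩ := hqS
  have hk'A := hY b' hb' hk'
  have hj'D := hj'.1
  have q1 := h.hD1 k' hk'A b' hb'
  have q2 := h.hD2 k' hk'A b' hb'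
  have hN := near_adj hzq
  by_cases hka : k' = a
  · subst hka
    have hjl : ¬ j' ≤ ℓ - 3 := fun hc => hq (Or.inl ⟨b', hb', hk', j', hc, rfl⟩)
    have hbb : b ≠ b' := by rintro rfl; exact hab hk'
    have := h.F5' haA hb' hj'D hm1
    have := h.far haA hb' (Or.inr hb) (h.disj k' haA b hb).symm hbb hj'D hm2
    omega
  rcases hz with ⟨b1, hb1, haY, i, hi, rfl⟩ |
    ⟨b1, hb1, haY, k, hk, hlt, j, hjl, hj, rfl, j1, hj1, i, hi, hn⟩
  · exfalso
    have z1 := h.hD1 a haA b1 hb1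
    have e := h.F2 haA hb1 hk'A hb' (Ne.symm hka) (by omega) hj'D hN
    subst e
    have hjl : ¬ j' ≤ ℓ - 3 := fun hc =>
      h.F3 haA hb1 hk'A hb1 (Ne.symm hka) hi hc (by norm_num) hN
    have h5 := h.F5 haA hb1 hk'A (by omega) hj'D hN
    have h6 := h.F6 haA hb1 hk'A (Ne.symm hka) (by omega)
    exact hq (Or.inr ⟨b1, hb1, haY, k', hk', by omega, j', hjl, hj', rfl, j', hj', i, hi, hN⟩)
  · have hkA := hY b1 hb1 hk
    have hbb : b ≠ b1 := by rintro rfl; exact hab haY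
    have hak : a ≠ k := by rintro rfl; omega
    have z1 := h.hD1 k hkA b1 hb1
    have z2 := h.hD2 k hkA b1 hb1
    have hjD := hj.1
    by_cases hkk : k' = k
    · subst hkk
      have hp : j ≤ j' + 1 := by
        have := h.F5' hkA hb1 hj.1 ((h.toA hkA hb' hj'D).symm'.trans' hN.symm')
        omega
      have e := h.F4 hkA hb1 hkA hb' (by omega) (by omega) hjD hj'D hN
      subst e
      have hjl' : j' ≤ ℓ - 3 := by
        by_contra hc
        exact hq (Or.inr ⟨b1, hb1, haY, k', hk, hlt, j', hc, hj', rfl, j1, hj1, i, hi, hn⟩)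
      have e1 := h.far hkA hb1 (Or.inl haA) hak (h.disj a haA b1 hb1) hj'D hm1.symm'
      have e2 := h.far hkA hb1 (Or.inr hb) (h.disj k' hkA b hb).symm hbb hj'D hm2
      omega
    · exfalso
      have e := h.F2 hkA hb1 hk'A hb' (Ne.symm hkk) hjD hj'D hN
      subst e
      by_cases hjl' : j' ≤ ℓ - 3
      · have h5 := h.F5 hk'A hb1 hkA (by omega) hjD hN.symm'
        have h6 := h.F6 hk'A hb1 hkA hkk (by omega)
        have hle : j ≤ j1 := by
          by_contra hc
          exact hj.2 j1 (by omega) ⟨a, haY, hlt, i, hi, hn⟩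
        have hge : j1 ≤ j := by
          by_contra hc
          exact hj1.2 j (by omega) ⟨k', hk', by omega, j', hjl', hN.symm'⟩
        have : j = j1 := by omega
        subst this
        exact h.F3 haA hb1 hk'A hb1 (Ne.symm hka) hi hjl' (by norm_num) (hn.trans' hN)
      · have h5 := h.F5 hk'A hb1 hkA (by omega) hjD hN.symm'
        have h5' := h.F5 hkA hb1 hk'A (by omega) hj'D hN
        rcases le_total (D k b1) (D k' b1) with hc | hc
        · have := h.kept_high (hY b1 hb1) hk'A hb1 hk (Ne.symm hkk) hc hj'
          omega
        · have := h.kept_high (hY b1 hb1) hkA hb1 hk' hkk hc hj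
          omega

theorem b_not_trap (h : Setup G ℓ A B p D) (Y : V → Finset V) (hY : ∀ b ∈ B, Y b ⊆ A)
    {a b : V} (haA : a ∈ A) (hb : b ∈ B) (hab : a ∉ Y b) : b ∉ Trap G ℓ B p D Y a := by
  rintro (⟨b1, hb1, haY, i, hi, e⟩ | ⟨b1, hb1, haY, k, hk, hlt, j, hjl, hj, e, -⟩)
  · have z1 := h.hD1 a haA b1 hb1
    have := h.toA haA hb1 (i := i) (by omega)
    rw [← e] at this
    have := h.geo a haA b hb _ this.symm'
    have := h.hD1 a haA b hb
    omega
  · have hkA := hY b1 hb1 hk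
    have hbb : b ≠ b1 := by rintro rfl; exact hab haY
    have z1 := h.hD1 k hkA b1 hb1
    have z2 := h.hD2 k hkA b1 hb1
    have hjD := hj.1
    have := h.far hkA hb1 (Or.inr hb) (h.disj k hkA b hb).symm hbb hjD
      (m := 0) (by rw [← e]; exact near_refl _ _ _)
    omega

theorem near_of_induce {S : Set V} {x y : S} {n : ℕ} (hn : Near (G.induce S) n x y) :
    Near G n x.1 y.1 := by
  obtain ⟨w, hw⟩ := hn
  exact ⟨w.map (SimpleGraph.Embedding.induce S).toHom, (w.length_map _).trans_le hw⟩

/-- Lower bound on distances in the induced subgraph. -/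
theorem lower (h : Setup G ℓ A B p D) (Y : V → Finset V) (hY : ∀ b ∈ B, Y b ⊆ A)
    {a b : V} (haA : a ∈ A) (hb : b ∈ B) (hab : a ∉ Y b) (hex : ∃ b1 ∈ B, a ∈ Y b1)
    (x y : KSet G ℓ B p D Y) (hx : x.1 = a) (hy : y.1 = b) {n : ℕ}
    (hn : Near (G.induce (KSet G ℓ B p D Y)) n x y) : 2 * ℓ ≤ n + 2 := by
  obtain ⟨w, hw⟩ := hn
  have hxT : x ∈ {v : KSet G ℓ B p D Y | v.1 ∈ Trap G ℓ B p D Y a} := by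
    obtain ⟨b1, hb1, ha1⟩ := hex
    exact Or.inl ⟨b1, hb1, ha1, 0, by omega, by rw [h.p0 a haA b1 hb1, hx]⟩
  have hyT : y ∉ {v : KSet G ℓ B p D Y | v.1 ∈ Trap G ℓ B p D Y a} := by
    intro hc
    apply h.b_not_trap Y hY haA hb hab
    rw [← hy]
    exact hc
  obtain ⟨d, hd, hd1, hd2⟩ := w.exists_boundary_dart _ hxT hyT
  classical
  have hs := w.dart_snd_mem_support_of_mem_darts hd
  have hlen := congrArg SimpleGraph.Walk.length (w.take_spec hs)
  rw [SimpleGraph.Walk.length_append] at hlen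
  have n1 : Near (G.induce (KSet G ℓ B p D Y)) _ x d.snd := ⟨w.takeUntil _ hs, le_rfl⟩
  have n2 : Near (G.induce (KSet G ℓ B p D Y)) _ d.snd y := ⟨w.dropUntil _ hs, le_rfl⟩
  have n1' := near_of_induce n1
  have n2' := near_of_induce n2
  rw [hx] at n1'
  rw [hy] at n2'
  have := h.lower_step Y hY haA hb hab hd1 hd2 d.snd.2 (by simpa using d.adj) n1' n2'
  omega

end Setup


theorem getD_support {G : SimpleGraph V} {a b : V} (w : G.Walk a b) {i : ℕ}
    (hi : i ≤ w.length) : w.support.getD i a = w.getVert i := by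
  have : i < w.support.length := by rw [w.length_support]; omega
  rw [List.getD_eq_getElem _ _ this, w.getVert_eq_support_getElem hi]

/-- The combinatorial data of an independent pair with the escape property. -/
theorem setup_of [LinearOrder (Sym2 V)] (d ℓ : ℕ)
    (G : SimpleGraph V) (A B : Finset V) (P : V → V → List V)
    (hP : IsMinPathFamily G A B P)
    (hind : IndependentPair G ℓ d A B P)
    (hesc : EscapeProperty G ℓ A B P) :
    Setup G ℓ A B (fun a b i => (P a b).getD i a) (fun a b => (P a b).length - 1) ∧
    ∀ a ∈ A, ∀ b ∈ B, (P a b).length - 1 + 2 ^ (d + 2) + 3 ≤ 2 * ℓ := by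
  obtain ⟨⟨hdis, hfar, hclose⟩, hcrit⟩ := hind
  have hne : ∀ a ∈ A, ∀ b ∈ B, a ≠ b := fun a ha b hb e =>
    (Finset.disjoint_left.mp hdis ha) (e ▸ hb)
  have hgeo : ∀ a ∈ A, ∀ b ∈ B, ∀ m, Near G m a b → (P a b).length - 1 ≤ m := by
    intro a ha b hb m hm
    obtain ⟨w, hw, hs⟩ := hP a ha b hb
    obtain ⟨w', hw'⟩ := hm
    have := hw.2.1 w'
    rw [← hs, w.length_support]
    omega
  have hlen : ∀ a ∈ A, ∀ b ∈ B, G.edist a b = (((P a b).length - 1 : ℕ) : ℕ∞) := by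
    intro a ha b hb
    obtain ⟨w, hw, hs⟩ := hP a ha b hb
    apply le_antisymm
    · rw [near_edist]
      exact ⟨w, by rw [← hs, w.length_support]; omega⟩
    · obtain ⟨w', hw'⟩ := SimpleGraph.exists_walk_of_edist_ne_top
        (ne_top_of_le_ne_top (ENat.natCast_ne_top _) w.edist_le)
      rw [← hw']
      exact_mod_cast hgeo a ha b hb _ ⟨w', le_rfl⟩
  have hD2 : ∀ a ∈ A, ∀ b ∈ B, (P a b).length - 1 + 2 ^ (d + 2) + 3 ≤ 2 * ℓ := by
    intro a ha b hb
    have := hclose a ha b hb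
    rw [hlen a ha b hb] at this
    exact_mod_cast this
  have hD1 : ∀ a ∈ A, ∀ b ∈ B, ℓ + 1 ≤ (P a b).length - 1 := by
    intro a ha b hb
    have := hfar a (Or.inl ha) b (Or.inr hb) (hne a ha b hb)
    rw [hlen a ha b hb] at this
    exact_mod_cast this
  have hpow : 4 ≤ 2 ^ (d + 2) := by
    have : 1 ≤ 2 ^ d := Nat.one_le_two_pow
    rw [pow_add]; omega
  have hcr : ∀ c a b : V, gball G c ℓ ∩ ((A : Set V) ∪ (B : Set V)) = {a, b} →
      ∀ x, (x ∈ A ∨ x ∈ B) → x ≠ a → x ≠ b → ∀ m, Near G m c x → ℓ + 1 ≤ m := by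
    intro c a b heq x hx hxa hxb m hm
    by_contra hc
    have : x ∈ gball G c ℓ ∩ ((A : Set V) ∪ (B : Set V)) := by
      refine ⟨?_, hx⟩
      show G.edist c x ≤ (ℓ : ℕ∞)
      rw [near_edist]
      obtain ⟨w, hw⟩ := hm
      exact ⟨w, by omega⟩
    rw [heq] at this
    rcases this with h | h
    · exact hxa h
    · exact hxb h
  have harc : ∀ b ∈ B, ∀ a a', DeepEscapeArc G ℓ A B P b a a' →
      ∃ b1 ∈ B, ∃ i j, i + 5 ≤ ℓ ∧ j ≤ (P a' b).length - 1 ∧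
        Near G 1 ((P a b1).getD i a) ((P a' b).getD j a') := by
    rintro b hb a a' ⟨ha, ha', u, v, ⟨⟨hadj, ⟨b1, hb1, hu⟩, -, -⟩, hdeep⟩, hne', hv⟩
    obtain ⟨i, hi, hiu⟩ := List.mem_iff_getElem.mp hu
    obtain ⟨j, hj, hjv⟩ := List.mem_iff_getElem.mp hv
    rw [List.length_take] at hi
    rw [List.getElem_take] at hiu
    have hil : i < (P a b1).length := by omega
    have e1 : (P a b1).getD i a = u := by rw [List.getD_eq_getElem _ _ hil, hiu]
    have e2 : (P a' b).getD j a' = v := by rw [List.getD_eq_getElem _ _ hj, hjv]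
    obtain ⟨h1, h2⟩ := hdeep a ha b1 hb1
    have h1' : i ≠ ℓ - 3 := by
      rintro rfl
      exact h1 e1.symm
    have h2' : i ≠ ℓ - 4 := by
      rintro rfl
      exact h2 e1.symm
    refine ⟨b1, hb1, i, j, by omega, by omega, ?_⟩
    rw [e1, e2]
    exact near_adj hadj
  refine ⟨⟨?_, ?_, ?_, hgeo, hD1, ?_, hne, ?_, ?_, ?_⟩, hD2⟩
  · intro a ha b hb
    obtain ⟨w, hw, hs⟩ := hP a ha b hb
    show (P a b).getD 0 a = a
    rw [← hs, getD_support w (Nat.zero_le _), w.getVert_zero]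
  · intro a ha b hb
    obtain ⟨w, hw, hs⟩ := hP a ha b hb
    show (P a b).getD ((P a b).length - 1) a = b
    rw [← hs, w.length_support, Nat.add_sub_cancel, getD_support w le_rfl, w.getVert_length]
  · intro a ha b hb i hi
    obtain ⟨w, hw, hs⟩ := hP a ha b hb
    show G.Adj ((P a b).getD i a) ((P a b).getD (i + 1) a)
    change i < (P a b).length - 1 at hi
    rw [← hs, w.length_support, Nat.add_sub_cancel] at hi
    rw [← hs, getD_support w (by omega), getD_support w (by omega)]
    exact w.adj_getVert_succ hi
  · intro a ha b hb
    have := hD2 a ha b hb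
    show (P a b).length - 1 + 7 ≤ 2 * ℓ
    omega
  · intro a ha b hb
    exact hcr _ a b (hcrit a ha b hb).1
  · intro a ha b hb
    have h2 := hcr _ a b (hcrit a ha b hb).2
    have := hD2 a ha b hb
    have := hD1 a ha b hb
    have e : (P a b).length - 1 - (ℓ - 3) = (P a b).length - (ℓ - 2) := by omega
    show ∀ x, (x ∈ A ∨ x ∈ B) → x ≠ a → x ≠ b → ∀ m,
      Near G m ((P a b).getD ((P a b).length - 1 - (ℓ - 3)) a) x → ℓ + 1 ≤ m
    rw [e]
    exact h2
  · intro b hb a ha a' ha' haa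
    rcases ((hesc b hb).1 a ha a' ha' haa).1 with h | h
    · exact Or.inl (harc b hb a a' h)
    · exact Or.inr (harc b hb a' a h)

/-- A labelling of a large set by all subsets of a given set. -/
theorem exists_label (X B : Finset V) (h : 2 ^ X.card ≤ B.card) :
    ∃ Y : V → Finset V, (∀ b, Y b ⊆ X) ∧ ∀ Z ⊆ X, ∃ b ∈ B, Y b = Z := by
  classical
  rw [← Finset.card_powerset] at h
  obtain ⟨B', hB', hc⟩ := Finset.exists_subset_card_eq h
  let e : B' ≃ X.powerset := Finset.equivOfCardEq hc
  refine ⟨fun b => if hb : b ∈ B' then (e ⟨b, hb⟩).1 else ∅, ?_, ?_⟩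
  · intro b
    dsimp only
    split_ifs with hb
    · exact Finset.mem_powerset.mp (e ⟨b, hb⟩).2
    · simp
  · intro Z hZ
    refine ⟨(e.symm ⟨Z, Finset.mem_powerset.mpr hZ⟩).1, hB' (e.symm _).2, ?_⟩
    simp

/-- The final counting argument. -/
theorem Setup.final {G : SimpleGraph V} {ℓ d : ℕ} {A B : Finset V} {p : V → V → ℕ → V}
    {D : V → V → ℕ} (h : Setup G ℓ A B p D) (hvc : distVCdimLE G d)
    (hD : ∀ a ∈ A, ∀ b ∈ B, D a b + 2 ^ (d + 2) + 3 ≤ 2 * ℓ)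
    (hA : 2 ^ (d + 1) ≤ A.card) (hB : 2 ^ (d + 1) ≤ B.card) : False := by
  classical
  have hlt : d + 1 < 2 ^ (d + 1) := Nat.lt_two_pow_self
  obtain ⟨X, hXA, hXc⟩ := Finset.exists_subset_card_eq (show d + 1 ≤ A.card by omega)
  obtain ⟨Y, hYX, hYs⟩ := exists_label X B (by rw [hXc]; exact hB)
  have hY : ∀ b ∈ B, Y b ⊆ A := fun b _ => (hYX b).trans hXA
  obtain ⟨bX, hbX, hbXY⟩ := hYs X subset_rfl
  have hex : ∀ a ∈ X, ∃ b1 ∈ B, a ∈ Y b1 := fun a ha => ⟨bX, hbX, by rw [hbXY]; exact ha⟩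
  have hup : ∀ b ∈ B, ∀ a ∈ Y b, ∃ w : G.Walk a b, w.length ≤ 2 * ℓ - 3 ∧
      ∀ v ∈ w.support, v ∈ KSet G ℓ B p D Y := by
    intro b hb a ha
    have haA := hY b hb ha
    obtain ⟨w, hw, hs⟩ := h.upper Y hY hb _ a ha le_rfl _ 0 rfl
      (h.kept_root (hY b hb) haA hb (Nat.zero_le _))
    have e := h.p0 a haA b hb
    have hcard : ((Y b).filter (fun x => D x b < D a b)).card + 1 ≤ d + 1 := by
      rw [← hXc]
      apply Finset.card_lt_card
      rw [Finset.ssubset_iff_of_subset]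
      · exact ⟨a, hYX b ha, by simp⟩
      · exact (Finset.filter_subset _ _).trans (hYX b)
    have := hD a haA b hb
    have hpow : 2 ^ (d + 2) = 2 * 2 ^ (d + 1) := by rw [pow_succ]; ring
    refine ⟨w.copy e rfl, ?_, ?_⟩
    · rw [SimpleGraph.Walk.length_copy]
      omega
    · intro v hv
      rw [SimpleGraph.Walk.support_copy] at hv
      exact hs v hv
  have hXS : ∀ a ∈ X, a ∈ KSet G ℓ B p D Y := by
    intro a ha
    obtain ⟨w, -, hs⟩ := hup bX hbX a (by rw [hbXY]; exact ha)
    exact hs _ w.start_mem_support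
  have hXne : X.Nonempty := by rw [← Finset.card_pos]; omega
  have hbS : ∀ b ∈ B, (Y b).Nonempty → b ∈ KSet G ℓ B p D Y := by
    rintro b hb ⟨a, ha⟩
    obtain ⟨w, -, hs⟩ := hup b hb a ha
    exact hs _ w.end_mem_support
  have hsh := hvc (KSet G ℓ B p D Y) {s | s.1 ∈ X} (by
    intro Y' hY'
    by_cases hYe : Y' = ∅
    · refine ⟨⟨bX, hbS bX hbX (by rw [hbXY]; exact hXne)⟩, 0, ?_⟩
      rw [hYe, Set.eq_empty_iff_forall_notMem]
      rintro ⟨s, hs⟩ ⟨h1, h2⟩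
      change SimpleGraph.edist _ _ _ ≤ ((0 : ℕ) : ℕ∞) at h1
      rw [near_edist] at h1
      have h3 := near_of_induce h1
      obtain ⟨w, hw⟩ := h3
      have : bX = s := SimpleGraph.Walk.eq_of_length_eq_zero (Nat.le_zero.mp hw)
      exact h.disj s (hXA h2) bX hbX this.symm
    · obtain ⟨y0, hy0⟩ := Set.nonempty_iff_ne_empty.mpr hYe
      obtain ⟨b, hb, hbY⟩ := hYs (X.filter (fun x => ∃ hx : x ∈ KSet G ℓ B p D Y, ⟨x, hx⟩ ∈ Y'))
        (Finset.filter_subset _ _)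
      have hmem : ∀ s : KSet G ℓ B p D Y, s.1 ∈ Y b ↔ s ∈ Y' := by
        intro s
        rw [hbY, Finset.mem_filter]
        constructor
        · rintro ⟨-, _, h2⟩
          exact h2
        · intro hs
          exact ⟨hY' hs, s.2, hs⟩
      refine ⟨⟨b, hbS b hb ⟨y0, (hmem y0).mpr hy0⟩⟩, 2 * ℓ - 3, ?_⟩
      ext s
      constructor
      · rintro ⟨h1, h2⟩
        change SimpleGraph.edist _ _ _ ≤ ((2 * ℓ - 3 : ℕ) : ℕ∞) at h1
        rw [near_edist] at h1
        rw [← hmem]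
        by_contra hc
        have := h.lower Y hY (hXA h2) hb hc (hex _ h2) s _ rfl rfl h1.symm'
        have := h.hD2 _ (hXA h2) b hb
        omega
      · intro hs
        refine ⟨?_, hY' hs⟩
        show SimpleGraph.edist _ _ _ ≤ ((2 * ℓ - 3 : ℕ) : ℕ∞)
        rw [near_edist]
        obtain ⟨w, hw, hsup⟩ := hup b hb s.1 ((hmem s).mpr hs)
        apply Near.symm'
        refine ⟨w.induce _ hsup, ?_⟩
        have := (w.induce _ hsup).length_map (SimpleGraph.Embedding.induce _).toHom
        rw [SimpleGraph.Walk.map_induce] at this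
        exact this.symm.trans_le hw)
  have hcardX : ({s | s.1 ∈ X} : Set (KSet G ℓ B p D Y)).ncard = X.card := by
    rw [← Set.ncard_coe_finset X, ← Set.ncard_image_of_injective _ Subtype.val_injective]
    congr 1
    ext v
    constructor
    · rintro ⟨s, hs, rfl⟩
      exact hs
    · intro hv
      exact ⟨⟨v, hXS v hv⟩, hv, rfl⟩
  omega

/-- Lemma `finiz`: if `G` has distance VC-dimension at most `d`, then every
independent pair satisfying the escape property has size at most `2^{d+1} - 1`. -/
theorem stmt17 (d ℓ : ℕ) {V : Type*} [Fintype V] [LinearOrder (Sym2 V)]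
    (G : SimpleGraph V) (hvc : distVCdimLE G d)
    (A B : Finset V) (P : V → V → List V)
    (hP : IsMinPathFamily G A B P)
    (hind : IndependentPair G ℓ d A B P)
    (hesc : EscapeProperty G ℓ A B P) :
    min A.card B.card ≤ 2 ^ (d + 1) - 1 := by
  obtain ⟨h, hD⟩ := setup_of d ℓ G A B P hP hind hesc
  have hpos : 1 ≤ 2 ^ (d + 1) := Nat.one_le_two_pow
  by_contra hc
  have h1 := min_le_left A.card B.card
  have h2 := min_le_right A.card B.card
  exact h.final hvc hD (by omega) (by omega)
end
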